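/- Let μ be a probability measure on B(0,1) ⊂ ℝ^d, s ∈ (0,d), ε ∈ (0,1/2], δ > 0 small enough. If I_s^δ(μ) ≤ δ^{-ε}, then there exists a Borel set A with μ(A) ≥ 1 − (log 1/δ)·δ^ε such that the restricted measure μ|_A satisfies μ|_A(B(x,r)) ≤ δ^{-2ε} r^s (up to an absolute multiplicative constant) for every x ∈ ℝ^d and every r ∈ [δ,1]. -/

import Mathlib

open MeasureTheory

lemma kern_fin {d : ℕ} (hd : 0 < d) {s : ℝ}  (hs : s < d) (R : ℝ) :
    ∫⁻ u in Metric.closedBall (0 : EuclideanSpace ℝ (Fin d)) R, ENNReal.ofReal (‖u‖ ^ (-s)) < ⊤ := by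
  have : Nonempty (Fin d) := ⟨⟨0, hd⟩⟩
  have h : Integrable (fun u : EuclideanSpace ℝ (Fin d) =>
      (Set.Iic R).indicator (fun t : ℝ => t ^ (-s)) ‖u‖) volume := by
    rw [integrable_fun_norm_addHaar (μ := (volume : Measure (EuclideanSpace ℝ (Fin d))))
      (f := (Set.Iic R).indicator (fun t : ℝ => t ^ (-s)))]
    have h1 : IntegrableOn (fun t : ℝ => t ^ ((d:ℝ) - 1 - s)) (Set.Ioc 0 (max R 0)) := by
      have := intervalIntegral.intervalIntegrable_rpow' (a := 0) (b := max R 0)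
        (r := (d:ℝ) - 1 - s) (by linarith)
      rwa [intervalIntegrable_iff_integrableOn_Ioc_of_le (le_max_right _ _)] at this
    have h2 : IntegrableOn (fun t : ℝ => (Set.Iic R).indicator (fun t : ℝ => t ^ ((d:ℝ) - 1 - s)) t)
        (Set.Ioi 0) := by
      rw [IntegrableOn, integrable_indicator_iff measurableSet_Iic, IntegrableOn,
        Measure.restrict_restrict measurableSet_Iic]
      refine h1.mono_set ?_
      rintro t ⟨h1, h2⟩
      exact ⟨h2, le_max_of_le_left h1⟩
    refine h2.congr_fun ?_ measurableSet_Ioi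
    intro t ht
    have ht : 0 < t := ht
    simp only [Set.indicator, finrank_euclideanSpace, Fintype.card_fin, smul_eq_mul]
    split_ifs
    · rw [← Real.rpow_natCast, ← Real.rpow_add ht]
      congr 1
      rw [Nat.cast_sub hd]
      push_cast; ring
    · simp
  have := h.lintegral_lt_top
  refine lt_of_le_of_lt ?_ this
  rw [← lintegral_indicator Metric.isClosed_closedBall.measurableSet]
  refine lintegral_mono fun u => ?_
  simp only [Set.indicator, Metric.mem_closedBall, dist_zero_right, Set.mem_Iic]
  split_ifs <;> simp

/-- The potential of `μ` at scale `δ`. -/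
noncomputable def pot {d : ℕ} (μ : Measure (EuclideanSpace ℝ (Fin d))) (s δ : ℝ)
    (z : EuclideanSpace ℝ (Fin d)) : ENNReal :=
  ∫⁻ w, ENNReal.ofReal ((‖z - w‖ + 2 * δ) ^ (-s)) ∂μ

lemma pot_meas {d : ℕ} (μ : Measure (EuclideanSpace ℝ (Fin d))) [IsProbabilityMeasure μ] (s δ : ℝ) :
    Measurable (pot μ s δ) := by
  unfold pot
  refine Measurable.lintegral_prod_right' (f := fun q : EuclideanSpace ℝ (Fin d) × EuclideanSpace ℝ (Fin d) => ENNReal.ofReal ((‖q.1 - q.2‖ + 2 * δ) ^ (-s))) ?_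
  fun_prop

lemma pot_le {d : ℕ} (hd : 0 < d) (μ : Measure (EuclideanSpace ℝ (Fin d))) [IsProbabilityMeasure μ] {s δ : ℝ}
    (hs : 0 < s) (hδ : 0 < δ)
    (p : EuclideanSpace ℝ (Fin d) → ENNReal) (hp : Measurable p)
    (hp0 : ∀ x, δ < ‖x‖ → p x = 0) :
    (∫⁻ x, p x) * ((∫⁻ x, p x) * ∫⁻ z, pot μ s δ z ∂μ) ≤
      ∫⁻ x, ∫⁻ y, (∫⁻ z, p (x - z) ∂μ) * (∫⁻ w, p (y - w) ∂μ) * ENNReal.ofReal (‖x - y‖ ^ (-s)) := by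
  have : Nonempty (Fin d) := ⟨⟨0, hd⟩⟩
  set c := ∫⁻ x, p x with hc
  have hF : Measurable fun x => ∫⁻ z, p (x - z) ∂μ :=
    Measurable.lintegral_prod_right' (f := fun q : EuclideanSpace ℝ (Fin d) × EuclideanSpace ℝ (Fin d) => p (q.1 - q.2)) (by fun_prop)
  have key : ∀ x z, p (x - z) ≠ 0 → c * pot μ s δ z ≤
      ∫⁻ y, (∫⁻ w, p (y - w) ∂μ) * ENNReal.ofReal (‖x - y‖ ^ (-s)) := by
    intro x z hxz
    have hxz : ‖x - z‖ ≤ δ := by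
      by_contra h
      exact hxz (hp0 _ (not_le.1 h))
    have e1 : c * pot μ s δ z = ∫⁻ w, (∫⁻ y, p (y - w) * ENNReal.ofReal ((‖z - w‖ + 2 * δ) ^ (-s))) ∂μ := by
      unfold pot
      rw [← lintegral_const_mul _ (by fun_prop)]
      refine lintegral_congr fun w => ?_
      rw [lintegral_mul_const _ (by fun_prop), lintegral_sub_right_eq_self]
    have e2 : ∫⁻ y, (∫⁻ w, p (y - w) ∂μ) * ENNReal.ofReal (‖x - y‖ ^ (-s)) =
        ∫⁻ w, (∫⁻ y, p (y - w) * ENNReal.ofReal (‖x - y‖ ^ (-s))) ∂μ := by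
      rw [lintegral_lintegral_swap (by fun_prop)]
      refine lintegral_congr fun y => ?_
      rw [lintegral_mul_const _ (by fun_prop)]
    rw [e1, e2]
    refine lintegral_mono fun w => lintegral_mono_ae ?_
    have : ∀ᵐ y : EuclideanSpace ℝ (Fin d), y ≠ x := by simp [ae_iff]
    filter_upwards [this] with y hy
    by_cases hyw : p (y - w) = 0
    · simp [hyw]
    have hyw : ‖y - w‖ ≤ δ := by
      by_contra h
      exact hyw (hp0 _ (not_le.1 h))
    gcongr 2
    have hpos : 0 < ‖x - y‖ := norm_pos_iff.2 (sub_ne_zero.2 hy.symm)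
    refine Real.rpow_le_rpow_of_nonpos hpos ?_ (by linarith)
    have : x - y = (x - z) + (z - w) - (y - w) := by abel
    rw [this]
    linarith [norm_sub_le ((x - z) + (z - w)) (y - w), norm_add_le (x - z) (z - w)]
  calc c * (c * ∫⁻ z, pot μ s δ z ∂μ) = ∫⁻ z, (∫⁻ x, p (x - z) * (c * pot μ s δ z)) ∂μ := by
        rw [← lintegral_const_mul _ (pot_meas μ s δ), ← lintegral_const_mul _ ((pot_meas μ s δ).const_mul _)]
        refine lintegral_congr fun z => ?_
        rw [lintegral_mul_const _ (by fun_prop), lintegral_sub_right_eq_self]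
    _ = ∫⁻ x, ∫⁻ z, p (x - z) * (c * pot μ s δ z) ∂μ := by
        have := pot_meas μ s δ
        rw [lintegral_lintegral_swap (by fun_prop)]
    _ ≤ ∫⁻ x, ∫⁻ z, p (x - z) * (∫⁻ y, (∫⁻ w, p (y - w) ∂μ) * ENNReal.ofReal (‖x - y‖ ^ (-s))) ∂μ := by
        refine lintegral_mono fun x => lintegral_mono fun z => ?_
        by_cases h : p (x - z) = 0
        · simp [h]
        · gcongr
          exact key x z h
    _ = _ := by
        refine lintegral_congr fun x => ?_
        rw [lintegral_mul_const _ (by fun_prop), ← lintegral_const_mul _ (by fun_prop)]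
        simp only [mul_assoc]

lemma P_meas {d : ℕ} (hd : 0 < d) (P : EuclideanSpace ℝ (Fin d) → ℝ)
    (hP : ∀ x y : EuclideanSpace ℝ (Fin d), ‖x‖ ≤ ‖y‖ → P y ≤ P x) : Measurable P := by
  set e : EuclideanSpace ℝ (Fin d) := EuclideanSpace.single ⟨0, hd⟩ 1
  have he : ‖e‖ = 1 := by simp [e]
  have h1 : Antitone fun t : ℝ => P ((max t 0) • e) := by
    intro a b hab
    apply hP
    rw [norm_smul, norm_smul, he]
    simp only [Real.norm_eq_abs, mul_one]
    rw [abs_of_nonneg (le_max_right _ _), abs_of_nonneg (le_max_right _ _)]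
    exact max_le_max hab le_rfl
  have h2 : P = fun x => (fun t : ℝ => P ((max t 0) • e)) ‖x‖ := by
    funext x
    have : ‖(max ‖x‖ 0) • e‖ = ‖x‖ := by
      rw [norm_smul, he]; simp
    exact le_antisymm (hP _ _ this.le) (hP _ _ this.ge)
  rw [h2]
  exact h1.measurable.comp measurable_norm

/-- The Bochner energy controls the `lintegral` energy (no junk value occurs). -/
lemma energy_eq {d : ℕ} (hd : 0 < d) {s : ℝ} (hs : s < d)
    (F : EuclideanSpace ℝ (Fin d) → ℝ) (hF : Measurable F) (hF0 : ∀ x, 0 ≤ F x)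
    (M R : ℝ) (hM : ∀ x, F x ≤ M) (hR : ∀ x, R < ‖x‖ → F x = 0) :
    ∫⁻ x, ∫⁻ y, ENNReal.ofReal (F x) * ENNReal.ofReal (F y) * ENNReal.ofReal (‖x - y‖ ^ (-s)) =
      ENNReal.ofReal (∫ x, ∫ y, F x * F y * ‖x - y‖ ^ (-s)) := by
  set K := ∫⁻ u in Metric.closedBall (0 : EuclideanSpace ℝ (Fin d)) (2 * R),
    ENNReal.ofReal (‖u‖ ^ (-s)) with hK
  have hKfin : K < ⊤ := kern_fin hd hs _
  set G : EuclideanSpace ℝ (Fin d) → ENNReal := fun x =>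
    ∫⁻ y, ENNReal.ofReal (F x) * ENNReal.ofReal (F y) * ENNReal.ofReal (‖x - y‖ ^ (-s)) with hG
  have hGm : Measurable G := by
    refine Measurable.lintegral_prod_right' (f := fun q : EuclideanSpace ℝ (Fin d) × EuclideanSpace ℝ (Fin d) => ENNReal.ofReal (F q.1) * ENNReal.ofReal (F q.2) * ENNReal.ofReal (‖q.1 - q.2‖ ^ (-s))) ?_
    fun_prop
  have hGle : ∀ x, G x ≤ (Metric.closedBall (0 : EuclideanSpace ℝ (Fin d)) R).indicator
      (fun _ => ENNReal.ofReal M * ENNReal.ofReal M * K) x := by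
    intro x
    by_cases hx : x ∈ Metric.closedBall (0 : EuclideanSpace ℝ (Fin d)) R
    · rw [Set.indicator_of_mem hx]
      have hx' : ‖x‖ ≤ R := by simpa using hx
      rw [hK, ← lintegral_indicator Metric.isClosed_closedBall.measurableSet,
        ← lintegral_const_mul _ (Measurable.indicator (by fun_prop) Metric.isClosed_closedBall.measurableSet),
        ← lintegral_sub_left_eq_self _ x]
      refine lintegral_mono fun y => ?_
      by_cases hy : R < ‖y‖
      · simp [hR y hy]
      · have : x - y ∈ Metric.closedBall (0 : EuclideanSpace ℝ (Fin d)) (2 * R) := by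
          simp only [Metric.mem_closedBall, dist_zero_right]
          linarith [norm_sub_le x y]
        rw [Set.indicator_of_mem this]
        gcongr
        · exact hM x
        · exact hM y
    · have hx' : R < ‖x‖ := by simpa using hx
      simp [hG, hR x hx']
  have hGtop : ∀ x, G x ≠ ⊤ := by
    intro x
    refine ne_top_of_le_ne_top ?_ (hGle x)
    simp only [Set.indicator]
    split_ifs
    · exact ENNReal.mul_ne_top (by simp [ENNReal.mul_ne_top]) hKfin.ne
    · simp
  have hin : ∀ x, ∫ y, F x * F y * ‖x - y‖ ^ (-s) = (G x).toReal := by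
    intro x
    rw [integral_eq_lintegral_of_nonneg_ae]
    · congr 1
      refine lintegral_congr fun y => ?_
      rw [ENNReal.ofReal_mul (mul_nonneg (hF0 x) (hF0 y)), ENNReal.ofReal_mul (hF0 x)]
    · refine Filter.Eventually.of_forall fun y => ?_
      have := hF0 x
      have := hF0 y
      simp only [Pi.zero_apply]
      positivity
    · exact Measurable.aestronglyMeasurable (by fun_prop)
  simp_rw [hin]
  rw [integral_toReal hGm.aemeasurable (Filter.Eventually.of_forall fun x => (hGtop x).lt_top)]
  rw [ENNReal.ofReal_toReal]
  refine ne_top_of_le_ne_top ?_ (lintegral_mono hGle)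
  rw [lintegral_indicator Metric.isClosed_closedBall.measurableSet, setLIntegral_const]
  refine ENNReal.mul_ne_top (ENNReal.mul_ne_top (by simp [ENNReal.mul_ne_top]) hKfin.ne) ?_
  exact measure_closedBall_lt_top.ne

theorem stmt4 :
    ∃ C > (0:ℝ), ∀ d : ℕ, 0 < d → ∀ s : ℝ, 0 < s → s < d →
      ∀ ε : ℝ, 0 < ε → ε ≤ 1 / 2 →
      ∀ P : EuclideanSpace ℝ (Fin d) → ℝ,
      (∀ x y : EuclideanSpace ℝ (Fin d), ‖x‖ ≤ ‖y‖ → P y ≤ P x) →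
      (∀ x, Set.indicator (Metric.closedBall (0 : EuclideanSpace ℝ (Fin d)) (1 / 2)) 1 x ≤ P x) →
      (∀ x, P x ≤ Set.indicator (Metric.closedBall (0 : EuclideanSpace ℝ (Fin d)) 1) 1 x) →
      ∃ δ₀ > (0:ℝ), ∀ δ : ℝ, 0 < δ → δ ≤ δ₀ →
      ∀ μ : Measure (EuclideanSpace ℝ (Fin d)), IsProbabilityMeasure μ →
      μ (Metric.closedBall 0 1)ᶜ = 0 →
      (∫ x : EuclideanSpace ℝ (Fin d), ∫ y : EuclideanSpace ℝ (Fin d),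
          (∫ z, δ ^ (-(d:ℝ)) * P (δ⁻¹ • (x - z)) ∂μ) *
          (∫ z, δ ^ (-(d:ℝ)) * P (δ⁻¹ • (y - z)) ∂μ) * ‖x - y‖ ^ (-s)) ≤ δ ^ (-ε) →
      ∃ A : Set (EuclideanSpace ℝ (Fin d)), MeasurableSet A ∧
        ENNReal.ofReal (1 - Real.log (1 / δ) * δ ^ ε) ≤ μ A ∧
        ∀ (x : EuclideanSpace ℝ (Fin d)) (r : ℝ), r ∈ Set.Icc δ 1 →
          μ.restrict A (Metric.closedBall x r) ≤ ENNReal.ofReal (C * δ ^ (-2 * ε) * r ^ s) := by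
  refine ⟨1, one_pos, ?_⟩
  intro d hd s hs0 hsd ε hε _ P hmono hlow hup
  have : Nonempty (Fin d) := ⟨⟨0, hd⟩⟩
  have hPm := P_meas hd P hmono
  have hP0 : ∀ x, 0 ≤ P x := fun x => le_trans (Set.indicator_nonneg (fun _ _ => zero_le_one) x) (hlow x)
  have hP1 : ∀ x, P x ≤ 1 := fun x => (hup x).trans (Set.indicator_le_self' (fun _ _ => zero_le_one) x)
  have hPz : ∀ x, 1 < ‖x‖ → P x = 0 := by
    intro x hx
    refine le_antisymm ((hup x).trans ?_) (hP0 x)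
    rw [Set.indicator_of_notMem]
    simpa using hx
  set V := (volume (Metric.closedBall (0 : EuclideanSpace ℝ (Fin d)) (1/2))) with hV
  have hVtop : V ≠ ⊤ := measure_closedBall_lt_top.ne
  have hVpos : 0 < V := Metric.measure_closedBall_pos _ _ (by norm_num)
  set v := V.toReal with hv
  have hvpos : 0 < v := ENNReal.toReal_pos hVpos.ne' hVtop
  refine ⟨Real.exp (-(4 ^ s / v ^ 2)), Real.exp_pos _, ?_⟩
  intro δ hδ hδ0 μ hμ hμ1 hE
  have hlog : 4 ^ s / v ^ 2 ≤ Real.log (1 / δ) := by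
    rw [one_div, Real.log_inv, le_neg]
    exact (Real.log_le_iff_le_exp hδ).2 hδ0
  set q : EuclideanSpace ℝ (Fin d) → ℝ := fun x => δ ^ (-(d:ℝ)) * P (δ⁻¹ • x) with hq
  have hqm : Measurable q := by fun_prop
  have hq0 : ∀ x, 0 ≤ q x := fun x => mul_nonneg (by positivity) (hP0 _)
  have hq1 : ∀ x, q x ≤ δ ^ (-(d:ℝ)) := fun x => mul_le_of_le_one_right (by positivity) (hP1 _)
  have hqz : ∀ x, δ < ‖x‖ → q x = 0 := by
    intro x hx
    simp only [hq]
    rw [hPz, mul_zero]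
    rw [norm_smul, norm_inv, Real.norm_of_nonneg hδ.le, inv_mul_eq_div, lt_div_iff₀ hδ]
    linarith
  have hqint : ∀ x, Integrable (fun z => q (x - z)) μ := by
    intro x
    refine Integrable.of_bound (Measurable.aestronglyMeasurable (by fun_prop)) (δ ^ (-(d:ℝ)))
      (Filter.Eventually.of_forall fun z => ?_)
    rw [Real.norm_of_nonneg (hq0 _)]
    exact hq1 _
  set F : EuclideanSpace ℝ (Fin d) → ℝ := fun x => ∫ z, q (x - z) ∂μ with hF
  have hFl : ∀ x, ENNReal.ofReal (F x) = ∫⁻ z, ENNReal.ofReal (q (x - z)) ∂μ := fun x =>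
    ofReal_integral_eq_lintegral_ofReal (hqint x) (Filter.Eventually.of_forall fun z => hq0 _)
  have hFm : Measurable F := by
    have : StronglyMeasurable F := by
      refine StronglyMeasurable.integral_prod_right (f := fun x z => q (x - z)) ?_
      exact Measurable.stronglyMeasurable (by fun_prop)
    exact this.measurable
  have hE2 := energy_eq hd hsd F hFm (fun x => integral_nonneg fun z => hq0 _) (δ ^ (-(d:ℝ)))
    (1 + δ) (by
      intro x
      calc F x ≤ ∫ z, δ ^ (-(d:ℝ)) ∂μ :=
            integral_mono (hqint x) (integrable_const _) (fun z => hq1 _)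
        _ = _ := by simp) (by
      intro x hx
      simp only [hF]
      refine integral_eq_zero_of_ae ?_
      have : ∀ᵐ z ∂μ, z ∈ Metric.closedBall (0 : EuclideanSpace ℝ (Fin d)) 1 := hμ1
      filter_upwards [this] with z hz
      have hz : ‖z‖ ≤ 1 := by simpa using hz
      refine hqz _ ?_
      linarith [norm_sub_norm_le x z])
  have hpot := pot_le hd μ hs0 hδ (fun x => ENNReal.ofReal (q x)) (by fun_prop)
    (fun x hx => by rw [hqz x hx, ENNReal.ofReal_zero])
  simp_rw [← hFl] at hpot
  rw [hE2] at hpot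
  have hcV : V ≤ ∫⁻ x, ENNReal.ofReal (q x) := by
    have h1 : V = ENNReal.ofReal (δ ^ (-(d:ℝ))) *
        volume (Metric.closedBall (0 : EuclideanSpace ℝ (Fin d)) (δ * (1/2))) := by
      rw [Measure.addHaar_closedBall_mul _ _ hδ.le (by norm_num), ← mul_assoc,
        ← ENNReal.ofReal_mul (by positivity), finrank_euclideanSpace, Fintype.card_fin,
        ← Real.rpow_natCast, ← Real.rpow_add hδ]
      simp [hV]
    rw [h1, ← setLIntegral_const, ← lintegral_indicator Metric.isClosed_closedBall.measurableSet]
    refine lintegral_mono fun x => ?_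
    by_cases hx : x ∈ Metric.closedBall (0 : EuclideanSpace ℝ (Fin d)) (δ * (1/2))
    · rw [Set.indicator_of_mem hx]
      refine ENNReal.ofReal_le_ofReal (le_mul_of_one_le_right (by positivity) ?_)
      refine le_trans ?_ (hlow _)
      rw [Set.indicator_of_mem]
      · simp
      · have hx : ‖x‖ ≤ δ * (1/2) := by simpa using hx
        simp only [Metric.mem_closedBall, dist_zero_right]
        rw [norm_smul, norm_inv, Real.norm_of_nonneg hδ.le, inv_mul_le_iff₀ hδ]
        exact hx
    · rw [Set.indicator_of_notMem hx]; exact zero_le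
  have hpot2 : V * (V * ∫⁻ z, pot μ s δ z ∂μ) ≤ ENNReal.ofReal (δ ^ (-ε)) :=
    le_trans (by gcongr) (hpot.trans (ENNReal.ofReal_le_ofReal hE))
  set T : ℝ := 4 ^ (-s) * δ ^ (-2 * ε) with hT
  have hTpos : 0 < T := by positivity
  have hpm := pot_meas μ s δ
  have hAm : MeasurableSet {z | pot μ s δ z < ENNReal.ofReal T} :=
    measurableSet_lt hpm measurable_const
  refine ⟨{z | pot μ s δ z < ENNReal.ofReal T}, hAm, ?_, ?_⟩
  · have hmk := mul_meas_ge_le_lintegral hpm (ENNReal.ofReal T) (μ := μ)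
    have hcompl : {z | pot μ s δ z < ENNReal.ofReal T}ᶜ = {z | ENNReal.ofReal T ≤ pot μ s δ z} := by
      ext z; simp
    set m := (μ {z | ENNReal.ofReal T ≤ pot μ s δ z}).toReal with hm
    have h1 : V * (V * (ENNReal.ofReal T * μ {z | ENNReal.ofReal T ≤ pot μ s δ z})) ≤
        ENNReal.ofReal (δ ^ (-ε)) := le_trans (by gcongr) hpot2
    have h2 : v * (v * (T * m)) ≤ δ ^ (-ε) := by
      have := ENNReal.toReal_mono ENNReal.ofReal_ne_top h1
      rwa [ENNReal.toReal_mul, ENNReal.toReal_mul, ENNReal.toReal_mul,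
        ENNReal.toReal_ofReal hTpos.le, ENNReal.toReal_ofReal (by positivity)] at this
    have h3 : m ≤ 4 ^ s / v ^ 2 * δ ^ ε := by
      have e1 : (4:ℝ) ^ (-s) * 4 ^ s = 1 := by rw [← Real.rpow_add (by norm_num)]; simp
      have e2 : δ ^ (-2 * ε) * δ ^ ε = δ ^ (-ε) := by
        rw [← Real.rpow_add hδ]; congr 1; ring
      have e3 : T * (4 ^ s * δ ^ ε) = δ ^ (-ε) := by
        rw [hT]
        calc _ = ((4:ℝ) ^ (-s) * 4 ^ s) * (δ ^ (-2 * ε) * δ ^ ε) := by ring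
          _ = _ := by rw [e1, e2, one_mul]
      rw [div_mul_eq_mul_div, le_div_iff₀ (by positivity)]
      rw [← e3] at h2
      refine le_of_mul_le_mul_left ?_ hTpos
      linarith
    have h4 : m ≤ Real.log (1 / δ) * δ ^ ε := h3.trans (by gcongr)
    have h5 : (μ {z | pot μ s δ z < ENNReal.ofReal T}).toReal = 1 - m := by
      have := probReal_compl_eq_one_sub hAm (μ := μ)
      rw [hcompl] at this
      simp only [measureReal_def] at this
      linarith
    rw [← ENNReal.ofReal_toReal (measure_ne_top μ {z | pot μ s δ z < ENNReal.ofReal T}), h5]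
    exact ENNReal.ofReal_le_ofReal (by linarith)
  · rintro x r ⟨hr1, _⟩
    have hr : 0 < r := hδ.trans_le hr1
    rw [Measure.restrict_apply Metric.isClosed_closedBall.measurableSet]
    rcases Set.eq_empty_or_nonempty (Metric.closedBall x r ∩ {z | pot μ s δ z < ENNReal.ofReal T}) with h | ⟨z, hz, hzA⟩
    · rw [h]; simp
    refine (measure_mono Set.inter_subset_left).trans ?_
    have h1 : ENNReal.ofReal ((4 * r) ^ (-s)) * μ (Metric.closedBall x r) ≤ pot μ s δ z := by
      rw [← setLIntegral_const]
      refine le_trans ?_ (setLIntegral_le_lintegral (Metric.closedBall x r) _)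
      refine setLIntegral_mono' Metric.isClosed_closedBall.measurableSet fun w hw => ?_
      refine ENNReal.ofReal_le_ofReal (Real.rpow_le_rpow_of_nonpos (by positivity) ?_ (by linarith))
      have := dist_triangle_right z w x
      rw [dist_eq_norm z w] at this
      have h1 : dist z x ≤ r := hz
      have h2 : dist w x ≤ r := hw
      linarith
    have h2 := h1.trans (le_of_lt hzA)
    have e : 1 * δ ^ (-2 * ε) * r ^ s = (4 * r) ^ s * T := by
      rw [hT, Real.mul_rpow (by norm_num) hr.le, Real.rpow_neg (by norm_num : (0:ℝ) ≤ 4)]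
      have : (4:ℝ) ^ s ≠ 0 := by positivity
      field_simp
    rw [e, ENNReal.ofReal_mul (by positivity)]
    calc μ (Metric.closedBall x r) = ENNReal.ofReal ((4 * r) ^ s) *
          (ENNReal.ofReal ((4 * r) ^ (-s)) * μ (Metric.closedBall x r)) := by
          rw [← mul_assoc, ← ENNReal.ofReal_mul (by positivity), ← Real.rpow_add (by positivity)]
          simp
      _ ≤ _ := by gcongr
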